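/- With 1, 2 denoting the first two indices of Fin n, the following identity of derivations holds: ⁅Θ_{1,2}, (x_{1,2})² • Θ_{2,1}⁆ = (2 * x_{1,2} * (x_{2,2} − x_{1,1})) • Θ_{2,1} − (x_{1,2})² • Ξ_1. (The bracket computation from the degree-2 step of the proof of Proposition 4.5 of the paper, written in the commutator convention ⁅D,D'⁆ = D∘D' − D'∘D.) -/

import Mathlib

/-!
On the generic matrix `M = (x_{k,l})` the field `Θ_{a,b}` acts entrywise as `M ↦ E_{ab} M - M E_{ab}`
(`Theta_X`) and `Ξ_a` as `M ↦ H M - M H` with `H = E_{aa} - E_{a'a'}` (`Xi_X`). Two such linear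
fields compose in the order opposite to the matrices, so `⁅Θ_{a,b}, Θ_{b,a}⁆` corresponds to
`[E_{ba}, E_{ab}] = -H`, that is, to `-Ξ_a` (`Theta_lie_Theta`). The theorem follows from the
Leibniz rule `⁅D, f • D'⁆ = D f • D' + f • ⁅D, D'⁆` and `Θ_{1,2} x_{1,2} = x_{2,2} - x_{1,1}`.
-/

open MvPolynomial

/-- The polynomial ring in the `n²` matrix entries. -/
abbrev MatPoly (n : ℕ) := MvPolynomial (Fin n × Fin n) ℂ

/-- The fundamental vector field `Θ_{a,b}` of the conjugation action. -/
noncomputable def Theta {n : ℕ} (a b : Fin n) : Derivation ℂ (MatPoly n) (MatPoly n) :=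
  ∑ k : Fin n,
    ((X (b, k) : MatPoly n) • (pderiv (a, k) : Derivation ℂ (MatPoly n) (MatPoly n))
      - (X (k, a) : MatPoly n) • (pderiv (k, b) : Derivation ℂ (MatPoly n) (MatPoly n)))

/-- The hyperbolic vector field `Ξ_a`, where `a'` denotes the successor `a + 1`. -/
noncomputable def Xi {n : ℕ} (a a' : Fin n) : Derivation ℂ (MatPoly n) (MatPoly n) :=
  ∑ k : Fin n,
    ((X (a, k) : MatPoly n) • (pderiv (a, k) : Derivation ℂ (MatPoly n) (MatPoly n))
      - (X (a', k) : MatPoly n) • (pderiv (a', k) : Derivation ℂ (MatPoly n) (MatPoly n))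
      - (X (k, a) : MatPoly n) • (pderiv (k, a) : Derivation ℂ (MatPoly n) (MatPoly n))
      + (X (k, a') : MatPoly n) • (pderiv (k, a') : Derivation ℂ (MatPoly n) (MatPoly n)))

lemma derivation_sum_apply {n : ℕ} (D : Fin n → Derivation ℂ (MatPoly n) (MatPoly n))
    (f : MatPoly n) : (∑ k, D k) f = ∑ k, D k f := by
  have h := congrFun (map_sum (Derivation.coeFnAddMonoidHom (R := ℂ) (A := MatPoly n)
    (M := MatPoly n)) D Finset.univ) f
  rwa [Finset.sum_apply] at h

lemma Theta_X {n : ℕ} (a b k l : Fin n) :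
    Theta a b (X (k, l)) =
      (if k = a then X (b, l) else 0) - (if l = b then X (k, a) else 0) := by
  have key : ∀ j : Fin n,
      (X (b, j) : MatPoly n) * pderiv (a, j) (X (k, l)) - X (j, a) * pderiv (j, b) (X (k, l)) =
        (if l = j then (if k = a then X (b, l) else 0) else 0)
          - (if k = j then (if l = b then X (k, a) else 0) else 0) := by
    intro j
    simp only [pderiv_X, Pi.single_apply, Prod.mk.injEq]
    split_ifs <;> simp_all
  simp only [Theta, derivation_sum_apply, Derivation.sub_apply, Derivation.smul_apply,
    smul_eq_mul, key]
  simp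

lemma Xi_X {n : ℕ} (a a' k l : Fin n) :
    Xi a a' (X (k, l)) =
      (if k = a then X (k, l) else 0) - (if k = a' then X (k, l) else 0)
        - (if l = a then X (k, l) else 0) + (if l = a' then X (k, l) else 0) := by
  have entry : ∀ c j : Fin n, (X (c, j) : MatPoly n) * pderiv (c, j) (X (k, l)) =
      if l = j then (if k = c then X (k, l) else 0) else 0 := by
    intro c j
    simp only [pderiv_X, Pi.single_apply, Prod.mk.injEq]
    split_ifs <;> simp_all
  simp only [Xi, derivation_sum_apply, Derivation.sub_apply, Derivation.add_apply,
    Derivation.smul_apply, smul_eq_mul, entry]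
  simp [Finset.sum_add_distrib]

lemma Theta_lie_Theta {n : ℕ} {a b : Fin n} (hab : a ≠ b) :
    ⁅Theta a b, Theta b a⁆ = -Xi a b := by
  have hba := hab.symm
  refine MvPolynomial.derivation_ext fun ⟨k, l⟩ => ?_
  simp only [Derivation.commutator_apply, Derivation.neg_apply, Theta_X, Xi_X, map_sub,
    apply_ite (Theta _ _), map_zero]
  by_cases hka : k = a <;> by_cases hkb : k = b <;> by_cases hla : l = a <;>
    by_cases hlb : l = b <;> simp_all

theorem stmt_9 {n : ℕ} (hn : 2 ≤ n)
    (i1 i2 : Fin n) (h1 : (i1 : ℕ) = 0) (h2 : (i2 : ℕ) = 1) :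
    ⁅Theta i1 i2, ((X (i1, i2) : MatPoly n) ^ 2) • Theta i2 i1⁆ =
      (2 * X (i1, i2) * (X (i2, i2) - X (i1, i1)) : MatPoly n) • Theta i2 i1
        - ((X (i1, i2) : MatPoly n) ^ 2) • Xi i1 i2 := by
  have hne : i1 ≠ i2 := by
    rintro rfl
    omega
  have leibniz : ∀ (D D' : Derivation ℂ (MatPoly n) (MatPoly n)) (f : MatPoly n),
      ⁅D, f • D'⁆ = D f • D' + f • ⁅D, D'⁆ := by
    intro D D' f
    ext1
    simp only [Derivation.commutator_apply, Derivation.add_apply, Derivation.smul_apply,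
      Derivation.leibniz, smul_eq_mul]
    ring
  have hsq : Theta i1 i2 ((X (i1, i2) : MatPoly n) ^ 2) =
      2 * X (i1, i2) * (X (i2, i2) - X (i1, i1)) := by
    rw [sq, Derivation.leibniz, Theta_X]
    simp only [if_true, smul_eq_mul]
    ring
  rw [leibniz, hsq, Theta_lie_Theta hne, smul_neg, ← sub_eq_add_neg]
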